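/- arXiv:1901.03361 — 4 statements merged into one kernel-verified Lean document; each statement's English description precedes it below -/
import Mathlib

section
/- A finite lattice C of languages over a finite alphabet A is quotient-closed if and only if its canonical preorder ≤_C is compatible with word concatenation: for all words u, v, u', v', if u ≤_C u' and v ≤_C v' then uv ≤_C u'v'. -/
open Set

namespace Paper

abbrev Lang (A : Type) := Set (List A)
abbrev LClass (A : Type) := Set (Set (List A))

variable {A R M : Type}

/-- A lattice of languages: contains `∅` and `A*`, closed under finite union
and finite intersection. -/
def LangLattice (𝒞 : LClass A) : Prop :=
  (∅ : Lang A) ∈ 𝒞 ∧ (Set.univ : Lang A) ∈ 𝒞 ∧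
    (∀ K L : Lang A, K ∈ 𝒞 → L ∈ 𝒞 → K ∪ L ∈ 𝒞) ∧
    (∀ K L : Lang A, K ∈ 𝒞 → L ∈ 𝒞 → K ∩ L ∈ 𝒞)

/-- A Boolean algebra of languages: a lattice closed under complement. -/
def LangBoolAlg (𝒞 : LClass A) : Prop :=
  LangLattice 𝒞 ∧ ∀ L : Lang A, L ∈ 𝒞 → Lᶜ ∈ 𝒞

/-- A class is quotient-closed when it is closed under left and right quotients
by words. -/
def QuotientClosed (𝒞 : LClass A) : Prop :=
  ∀ L ∈ 𝒞, ∀ w : List A,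
    {u : List A | w ++ u ∈ L} ∈ 𝒞 ∧ {u : List A | u ++ w ∈ L} ∈ 𝒞

/-- The canonical preorder `≤_𝒞` associated with a class `𝒞`. -/
def cle (𝒞 : LClass A) (w w' : List A) : Prop := ∀ L ∈ 𝒞, w ∈ L → w' ∈ L

/-- The canonical equivalence `∼_𝒞` associated with a class `𝒞`. -/
def ceq (𝒞 : LClass A) (w w' : List A) : Prop := ∀ L ∈ 𝒞, (w ∈ L ↔ w' ∈ L)

/-- The `∼_𝒞`-class of the word `w`. -/
def cclass (𝒞 : LClass A) (w : List A) : Lang A := {v | ceq 𝒞 w v}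

/-- `D` is a `∼_𝒞`-class. -/
def IsCClass (𝒞 : LClass A) (D : Lang A) : Prop := ∃ w : List A, D = cclass 𝒞 w

/-- Multiplication of `∼_𝒞`-classes (the class of the concatenation of
representatives). -/
def cmul (𝒞 : LClass A) (D E : Lang A) : Lang A :=
  {x | ∃ u ∈ D, ∃ v ∈ E, ceq 𝒞 (u ++ v) x}

/-- Language concatenation. -/
def cat (K L : Lang A) : Lang A := {w | ∃ u ∈ K, ∃ v ∈ L, u ++ v = w}

/-- Marked concatenation `K a L`. -/
def mcat (K : Lang A) (a : A) (L : Lang A) : Lang A :=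
  {w | ∃ u ∈ K, ∃ v ∈ L, u ++ a :: v = w}

/-- Boolean closure: the least Boolean algebra containing `𝒞`. -/
def BoolC (𝒞 : LClass A) : LClass A := ⋂₀ {𝒟 : LClass A | LangBoolAlg 𝒟 ∧ 𝒞 ⊆ 𝒟}

/-- Polynomial closure: the least class containing `𝒞` closed under union and
marked concatenation. -/
def PolC (𝒞 : LClass A) : LClass A :=
  ⋂₀ {𝒟 : LClass A | 𝒞 ⊆ 𝒟 ∧
    (∀ K L : Lang A, K ∈ 𝒟 → L ∈ 𝒟 → K ∪ L ∈ 𝒟) ∧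
    (∀ (K L : Lang A) (a : A), K ∈ 𝒟 → L ∈ 𝒟 → mcat K a L ∈ 𝒟)}

/-- A cover of `L`: a finite set of languages whose union includes `L`. -/
def IsCover (Ks : LClass A) (L : Lang A) : Prop := Ks.Finite ∧ L ⊆ ⋃₀ Ks

/-- A `𝒞`-cover of `L`: a cover all of whose members belong to `𝒞`. -/
def IsCCover (𝒞 Ks : LClass A) (L : Lang A) : Prop := IsCover Ks L ∧ Ks ⊆ 𝒞

/-- `α : A* → M` is a monoid morphism. -/
def IsMonoidMorphism [Monoid M] (α : List A → M) : Prop :=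
  α [] = 1 ∧ ∀ u v : List A, α (u ++ v) = α u * α v

/-- `α` recognizes `L`. -/
def Recognizes [Monoid M] (α : List A → M) (L : Lang A) : Prop :=
  ∃ F : Set M, L = α ⁻¹' F

/-- A language is regular when it is recognized by a monoid morphism into a
finite monoid. -/
def RegularLang (L : Lang A) : Prop :=
  ∃ (N : Type) (_ : Monoid N) (_ : Finite N) (α : List A → N),
    IsMonoidMorphism α ∧ Recognizes α L

/-- The canonical order on a rating set: `r ≤ s` iff `r + s = s`. -/
def rle [Add R] (r s : R) : Prop := r + s = s

/-- A rating map: maps `∅` to `0` and commutes with binary union. -/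
def IsRatingMap [AddCommMonoid R] (ρ : Lang A → R) : Prop :=
  ρ ∅ = 0 ∧ ∀ K L : Lang A, ρ (K ∪ L) = ρ K + ρ L

/-- A nice rating map: the value of any language is a finite sum of values of
its words. -/
def IsNice [AddCommMonoid R] (ρ : Lang A → R) : Prop :=
  ∀ K : Lang A, ∃ l : List (List A), (∀ w ∈ l, w ∈ K) ∧
    ρ K = (l.map fun w => ρ {w}).sum

/-- A multiplicative rating map: also a morphism for concatenation. -/
def IsMultiplicative [Semiring R] (ρ : Lang A → R) : Prop :=
  ρ ({[]} : Lang A) = 1 ∧ ∀ K L : Lang A, ρ (cat K L) = ρ K * ρ L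

/-- An endomorphism of the additive monoid `(R, +)`. -/
def IsAddEndo [AddCommMonoid R] (γ : R → R) : Prop :=
  γ 0 = 0 ∧ ∀ r s : R, γ (r + s) = γ r + γ s

/-- A quasi-multiplicative rating map for the endomorphism `γ`. -/
def IsQuasiMult [Semiring R] (ρ : Lang A → R) (γ : R → R) : Prop :=
  IsAddEndo γ ∧ (∀ q r s : R, γ (q * γ r * s) = γ (q * r * s)) ∧
    ∀ K L : Lang A, ρ (cat K L) = γ (ρ K * ρ L)

/-- The `ρ`-imprint of a set of languages. -/
def imprint [Add R] (ρ : Lang A → R) (Ks : LClass A) : Set R :=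
  {r | ∃ K ∈ Ks, rle r (ρ K)}

/-- The `𝒟`-optimal `ρ`-imprint on `L` (the imprint of any optimal `𝒟`-cover
of `L`, i.e. the intersection of the imprints of all `𝒟`-covers of `L`). -/
def optImprint [Add R] (𝒟 : LClass A) (ρ : Lang A → R) (L : Lang A) : Set R :=
  {r | ∀ Ks : LClass A, IsCCover 𝒟 Ks L → r ∈ imprint ρ Ks}

/-- Downset operation on subsets of a rating set. -/
def dclos [Add R] (U : Set R) : Set R := {r | ∃ s ∈ U, rle r s}

/-- Pointwise multiplication of subsets of a rating set. -/
def smul [Mul R] (U V : Set R) : Set R := {x | ∃ u ∈ U, ∃ v ∈ V, u * v = x}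

/-!
The languages of a class `𝒞` closed under arbitrary unions and intersections are exactly the upper
sets of `≤_𝒞`: the words above `w` form the intersection of all members of `𝒞` containing `w`, and
an upper set is the union of the sets of words above its elements. When concatenation is monotone,
the quotients of a member of `𝒞` are upper sets, hence belong to `𝒞`. Conversely, quotient-closure
makes `uv ≤_𝒞 u'v ≤_𝒞 u'v'`, changing one factor at a time.
-/

section

variable {𝒞 : LClass A}

theorem cle_refl (𝒞 : LClass A) (w : List A) : cle 𝒞 w w := fun _ _ hw => hw

theorem cle.trans {u v w : List A} (huv : cle 𝒞 u v) (hvw : cle 𝒞 v w) : cle 𝒞 u w :=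
  fun L hL hu => hvw L hL (huv L hL hu)

theorem setOf_cle_eq_sInter (𝒞 : LClass A) (w : List A) :
    {w' | cle 𝒞 w w'} = ⋂₀ {L ∈ 𝒞 | w ∈ L} :=
  Set.ext fun _ => ⟨fun hle L hL => hle L hL.1 hL.2, fun hmem L hL hw => hmem L ⟨hL, hw⟩⟩

theorem eq_sUnion_image_setOf_cle {X : Lang A}
    (hX : ∀ ⦃w w'⦄, cle 𝒞 w w' → w ∈ X → w' ∈ X) :
    X = ⋃₀ ((fun w => {w' | cle 𝒞 w w'}) '' X) := by
  apply Subset.antisymm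
  · exact fun w hw => ⟨_, mem_image_of_mem _ hw, cle_refl 𝒞 w⟩
  · rintro w' ⟨_, ⟨w, hw, rfl⟩, hle⟩
    exact hX hle hw

theorem mem_of_forall_cle (hUnion : ∀ S ⊆ 𝒞, ⋃₀ S ∈ 𝒞) (hInter : ∀ S ⊆ 𝒞, ⋂₀ S ∈ 𝒞)
    {X : Lang A} (hX : ∀ ⦃w w'⦄, cle 𝒞 w w' → w ∈ X → w' ∈ X) : X ∈ 𝒞 := by
  have principal_mem (w : List A) : {w' | cle 𝒞 w w'} ∈ 𝒞 := by
    rw [setOf_cle_eq_sInter]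
    exact hInter _ (sep_subset _ _)
  rw [eq_sUnion_image_setOf_cle hX]
  exact hUnion _ (image_subset_iff.2 fun w _ => principal_mem w)

namespace QuotientClosed

theorem cle_append_right (hq : QuotientClosed 𝒞) {u u' : List A} (hu : cle 𝒞 u u')
    (v : List A) : cle 𝒞 (u ++ v) (u' ++ v) :=
  fun L hL => hu _ (hq L hL v).2

theorem cle_append_left (hq : QuotientClosed 𝒞) (u : List A) {v v' : List A}
    (hv : cle 𝒞 v v') : cle 𝒞 (u ++ v) (u ++ v') :=
  fun L hL => hv _ (hq L hL u).1

end QuotientClosed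

namespace LangLattice

theorem sUnion_mem (hlat : LangLattice 𝒞) {S : LClass A} (hS : S.Finite) (hS𝒞 : S ⊆ 𝒞) :
    ⋃₀ S ∈ 𝒞 :=
  have hsup : SupClosed 𝒞 := fun K hK L hL => hlat.2.2.1 K L hK hL
  hsup.sSup_mem hS hlat.1 hS𝒞

theorem sInter_mem (hlat : LangLattice 𝒞) {S : LClass A} (hS : S.Finite) (hS𝒞 : S ⊆ 𝒞) :
    ⋂₀ S ∈ 𝒞 :=
  have hinf : InfClosed 𝒞 := fun K hK L hL => hlat.2.2.2 K L hK hL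
  hinf.sInf_mem hS hlat.2.1 hS𝒞

end LangLattice

theorem statement3_general (hUnion : ∀ S ⊆ 𝒞, ⋃₀ S ∈ 𝒞) (hInter : ∀ S ⊆ 𝒞, ⋂₀ S ∈ 𝒞) :
    QuotientClosed 𝒞 ↔
      ∀ u v u' v' : List A, cle 𝒞 u u' → cle 𝒞 v v' →
        cle 𝒞 (u ++ v) (u' ++ v') := by
  constructor
  · intro hq u v u' v' hu hv
    exact (hq.cle_append_right hu v).trans (hq.cle_append_left u' hv)
  · intro happend L hL w
    constructor
    · exact mem_of_forall_cle hUnion hInter fun u u' hu =>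
        happend w u w u' (cle_refl 𝒞 w) hu L hL
    · exact mem_of_forall_cle hUnion hInter fun u u' hu =>
        happend u w u' w hu (cle_refl 𝒞 w) L hL

end

/-- A finite lattice `𝒞` is quotient-closed iff its canonical
preorder `≤_𝒞` is compatible with word concatenation. -/
theorem statement3 {A : Type} [Fintype A] (𝒞 : LClass A) (hfin : 𝒞.Finite)
    (hlat : LangLattice 𝒞) :
    QuotientClosed 𝒞 ↔
      ∀ u v u' v' : List A, cle 𝒞 u u' → cle 𝒞 v v' →
        cle 𝒞 (u ++ v) (u' ++ v') :=
  statement3_general (fun _ hS => hlat.sUnion_mem (hfin.subset hS) hS)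
    (fun _ hS => hlat.sInter_mem (hfin.subset hS) hS)

end Paper
end

section
/- Let C be a quotient-closed lattice whose members are all regular languages over a finite alphabet A. Then the polynomial closure Pol(C) is a quotient-closed lattice which is closed under concatenation (K, L ∈ Pol(C) implies KL ∈ Pol(C)) and under marked concatenation (K, L ∈ Pol(C) and a ∈ A implies KaL ∈ Pol(C)). -/
open Set

namespace Paper

variable {A R M : Type}

/-!
Call a language *split* by a class `𝒟` if its factorizations `u ++ v ∈ L` are described by finitely
many rectangles `U × V` with `U, V ∈ 𝒟`. A regular member `L` of a quotient-closed class `𝒞` that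
is closed under finite intersection is split by `𝒞`: it has finitely many left quotients `Q`, and
the words whose left quotient contains `Q` form a finite intersection of right quotients of `L`.
Splitting passes from `𝒞` to `Pol(𝒞)`, because a factorization of a word of `KaL` cuts it either
inside `K` or inside `L`. Quotients by a word are then read off from the rectangles, and for `M`
split by the rectangles `U × V`, the intersection `M ∩ KaL` is the union of the marked
concatenations `(U ∩ K) a (a⁻¹V ∩ L)`, so that intersections are handled by structural induction.
-/

section Quotients

/-- The left quotient `w⁻¹L`. -/
def leftQuotient (w : List A) (L : Lang A) : Lang A := {u | w ++ u ∈ L}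

/-- The right quotient `Lw⁻¹`. -/
def rightQuotient (w : List A) (L : Lang A) : Lang A := {u | u ++ w ∈ L}

lemma RegularLang.finite_range_leftQuotient {L : Lang A} (hL : RegularLang L) :
    (range fun w => leftQuotient w L).Finite := by
  obtain ⟨N, _, _, α, hα, F, rfl⟩ := hL
  refine (finite_range fun n : N => {u : List A | n * α u ∈ F}).subset ?_
  rintro _ ⟨w, rfl⟩
  exact ⟨α w, by simp only [leftQuotient, mem_preimage, hα.2]⟩

lemma RegularLang.finite_range_rightQuotient {L : Lang A} (hL : RegularLang L) :
    (range fun w => rightQuotient w L).Finite := by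
  obtain ⟨N, _, _, α, hα, F, rfl⟩ := hL
  refine (finite_range fun n : N => {u : List A | α u * n ∈ F}).subset ?_
  rintro _ ⟨w, rfl⟩
  exact ⟨α w, by simp only [rightQuotient, mem_preimage, hα.2]⟩

lemma append_mem_mcat_iff {K L : Lang A} {a : A} {u v : List A} :
    u ++ v ∈ mcat K a L ↔
      v ∈ mcat (leftQuotient u K) a L ∨ u ∈ mcat K a (rightQuotient v L) := by
  constructor
  · rintro ⟨k, hk, l, hl, hkl⟩
    rcases List.append_eq_append_iff.1 hkl with ⟨x, rfl, hx⟩ | ⟨x, rfl, rfl⟩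
    · rcases List.cons_eq_append_iff.1 hx with ⟨rfl, rfl⟩ | ⟨y, rfl, rfl⟩
      · exact .inl ⟨[], by simpa [leftQuotient] using hk, l, hl, rfl⟩
      · exact .inr ⟨k, hk, y, hl, rfl⟩
    · exact .inl ⟨x, hk, l, hl, rfl⟩
  · rintro (⟨x, hx, l, hl, rfl⟩ | ⟨k, hk, y, hy, rfl⟩)
    · exact ⟨u ++ x, hx, l, hl, List.append_assoc ..⟩
    · exact ⟨k, hk, y ++ v, hy, by simp⟩

lemma cat_eq_union_iUnion_mcat (K L : Lang A) :
    cat K L = (⋃ _ : [] ∈ L, K) ∪ ⋃ a, mcat K a (leftQuotient [a] L) := by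
  ext w
  simp only [mem_union, mem_iUnion, exists_prop]
  constructor
  · rintro ⟨k, hk, _ | ⟨a, l⟩, hl, rfl⟩
    · exact .inl ⟨hl, by simpa using hk⟩
    · exact .inr ⟨a, k, hk, l, hl, rfl⟩
  · rintro (⟨hnil, hw⟩ | ⟨a, k, hk, l, hl, rfl⟩)
    · exact ⟨w, hw, [], hnil, List.append_nil w⟩
    · exact ⟨k, hk, a :: l, hl, rfl⟩

lemma cat_mem_of_mcat_mem [Finite A] {𝒟 : LClass A} (hempty : ∅ ∈ 𝒟) (hsup : SupClosed 𝒟)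
    (hquot : QuotientClosed 𝒟) (hmcat : ∀ K ∈ 𝒟, ∀ a, ∀ L ∈ 𝒟, mcat K a L ∈ 𝒟)
    {K L : Lang A} (hK : K ∈ 𝒟) (hL : L ∈ 𝒟) : cat K L ∈ 𝒟 := by
  rw [cat_eq_union_iUnion_mcat]
  exact hsup (hsup.iSup_mem hempty fun _ => hK)
    (hsup.iSup_mem hempty fun a => hmcat K hK a _ (hquot L hL [a]).1)

end Quotients

section PolynomialClosure

variable {𝒞 : LClass A} {K L : Lang A}

lemma subset_polC : 𝒞 ⊆ PolC 𝒞 :=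
  fun _ hL _ h𝒟 => h𝒟.1 hL

lemma supClosed_polC : SupClosed (PolC 𝒞) :=
  fun K hK L hL 𝒟 h𝒟 => h𝒟.2.1 K L (hK 𝒟 h𝒟) (hL 𝒟 h𝒟)

lemma mcat_mem_polC (hK : K ∈ PolC 𝒞) (a : A) (hL : L ∈ PolC 𝒞) : mcat K a L ∈ PolC 𝒞 :=
  fun 𝒟 h𝒟 => h𝒟.2.2 K L a (hK 𝒟 h𝒟) (hL 𝒟 h𝒟)

lemma polC_induction {P : ∀ L, L ∈ PolC 𝒞 → Prop}
    (base : ∀ L (hL : L ∈ 𝒞), P L (subset_polC hL))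
    (union : ∀ K L hK hL, P K hK → P L hL → P (K ∪ L) (supClosed_polC hK hL))
    (mcat : ∀ K L a hK hL, P K hK → P L hL → P (mcat K a L) (mcat_mem_polC hK a hL))
    (hL : L ∈ PolC 𝒞) : P L hL := by
  have hmem : L ∈ {L | ∃ hL, P L hL} :=
    hL _ ⟨fun L hL => ⟨_, base L hL⟩,
      fun K L ⟨hK, hPK⟩ ⟨hL, hPL⟩ => ⟨_, union K L hK hL hPK hPL⟩,
      fun K L a ⟨hK, hPK⟩ ⟨hL, hPL⟩ => ⟨_, mcat K L a hK hL hPK hPL⟩⟩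
  exact hmem.2

end PolynomialClosure

section Splitting

/-- `L` is split by `𝒟` when `{(u, v) | u ++ v ∈ L}` is a finite union of rectangles `U ×ˢ V` with
`U, V ∈ 𝒟`; a rectangle is encoded as the pair of its sides. -/
def FinitelySplits (𝒟 : LClass A) (L : Lang A) : Prop :=
  ∃ S : Set (Lang A × Lang A), S.Finite ∧ S ⊆ 𝒟 ×ˢ 𝒟 ∧
    ∀ u v : List A, u ++ v ∈ L ↔ ∃ p ∈ S, u ∈ p.1 ∧ v ∈ p.2

variable {𝒞 𝒟 : LClass A} {K L : Lang A}

lemma finitelySplits_of_finite_quotients (huniv : univ ∈ 𝒟) (hinf : InfClosed 𝒟)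
    (hquot : QuotientClosed 𝒟) (hL : L ∈ 𝒟)
    (hleft : (range fun w => leftQuotient w L).Finite)
    (hright : (range fun w => rightQuotient w L).Finite) : FinitelySplits 𝒟 L := by
  let prefixes (Q : Lang A) : Lang A := ⋂₀ ((fun v => rightQuotient v L) '' Q)
  have mem_prefixes {u : List A} {Q : Lang A} : u ∈ prefixes Q ↔ ∀ v ∈ Q, u ++ v ∈ L := by
    simp [prefixes, rightQuotient]
  have prefixes_mem (Q : Lang A) : prefixes Q ∈ 𝒟 := by
    refine hinf.sInf_mem (hright.subset (image_subset_range _ _)) huniv ?_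
    rintro _ ⟨v, -, rfl⟩
    exact (hquot L hL v).2
  refine ⟨_, hleft.image fun Q => (prefixes Q, Q), ?_, fun u v => ⟨fun huv => ?_, ?_⟩⟩
  · rintro _ ⟨_, ⟨w, rfl⟩, rfl⟩
    exact ⟨prefixes_mem _, (hquot L hL w).1⟩
  · exact ⟨_, mem_image_of_mem _ (mem_range_self u), mem_prefixes.2 fun _ hv => hv, huv⟩
  · rintro ⟨_, ⟨Q, -, rfl⟩, hu, hv⟩
    exact mem_prefixes.1 hu v hv

lemma FinitelySplits.mono (h𝒞𝒟 : 𝒞 ⊆ 𝒟) (hL : FinitelySplits 𝒞 L) : FinitelySplits 𝒟 L :=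
  let ⟨S, hfin, hmem, hsplit⟩ := hL
  ⟨S, hfin, hmem.trans (prod_mono h𝒞𝒟 h𝒞𝒟), hsplit⟩

lemma FinitelySplits.union (hK : FinitelySplits 𝒟 K) (hL : FinitelySplits 𝒟 L) :
    FinitelySplits 𝒟 (K ∪ L) := by
  obtain ⟨S, hSfin, hSmem, hS⟩ := hK
  obtain ⟨T, hTfin, hTmem, hT⟩ := hL
  refine ⟨S ∪ T, hSfin.union hTfin, union_subset hSmem hTmem, fun u v => ?_⟩
  simp only [mem_union, hS, hT, or_and_right, exists_or]

lemma FinitelySplits.mcat (hmcat : ∀ K ∈ 𝒟, ∀ a, ∀ L ∈ 𝒟, mcat K a L ∈ 𝒟)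
    (hK : K ∈ 𝒟) (hL : L ∈ 𝒟) (a : A) (hKsplit : FinitelySplits 𝒟 K)
    (hLsplit : FinitelySplits 𝒟 L) : FinitelySplits 𝒟 (mcat K a L) := by
  obtain ⟨S, hSfin, hSmem, hS⟩ := hKsplit
  obtain ⟨T, hTfin, hTmem, hT⟩ := hLsplit
  refine ⟨(fun p => (p.1, Paper.mcat p.2 a L)) '' S ∪ (fun p => (Paper.mcat K a p.1, p.2)) '' T,
    (hSfin.image _).union (hTfin.image _), union_subset ?_ ?_, fun u v => ?_⟩
  · rintro _ ⟨p, hp, rfl⟩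
    exact ⟨(hSmem hp).1, hmcat _ (hSmem hp).2 a L hL⟩
  · rintro _ ⟨p, hp, rfl⟩
    exact ⟨hmcat K hK a _ (hTmem hp).1, (hTmem hp).2⟩
  rw [append_mem_mcat_iff]
  simp only [mem_union, or_and_right, exists_or, exists_mem_image]
  refine or_congr ⟨?_, ?_⟩ ⟨?_, ?_⟩
  · rintro ⟨x, hx, l, hl, rfl⟩
    obtain ⟨p, hp, hu, hxp⟩ := (hS u x).1 hx
    exact ⟨p, hp, hu, x, hxp, l, hl, rfl⟩
  · rintro ⟨p, hp, hu, x, hxp, l, hl, rfl⟩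
    exact ⟨x, (hS u x).2 ⟨p, hp, hu, hxp⟩, l, hl, rfl⟩
  · rintro ⟨k, hk, y, hy, rfl⟩
    obtain ⟨p, hp, hyp, hv⟩ := (hT y v).1 hy
    exact ⟨p, hp, ⟨k, hk, y, hyp, rfl⟩, hv⟩
  · rintro ⟨p, hp, ⟨k, hk, y, hyp, rfl⟩, hv⟩
    exact ⟨k, hk, y, (hT y v).2 ⟨p, hp, hyp, hv⟩, rfl⟩

lemma finitelySplits_polC (h𝒞 : ∀ L ∈ 𝒞, FinitelySplits 𝒞 L) (hL : L ∈ PolC 𝒞) :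
    FinitelySplits (PolC 𝒞) L := by
  induction hL using polC_induction with
  | base L hL => exact (h𝒞 L hL).mono subset_polC
  | union K L _ _ hK hL => exact hK.union hL
  | mcat K L a hKmem hLmem hK hL =>
    exact FinitelySplits.mcat (fun _ hK a _ hL => mcat_mem_polC hK a hL) hKmem hLmem a hK hL

lemma quotientClosed_of_finitelySplits (hempty : ∅ ∈ 𝒟) (hsup : SupClosed 𝒟)
    (hsplit : ∀ L ∈ 𝒟, FinitelySplits 𝒟 L) : QuotientClosed 𝒟 := by
  intro L hL w
  obtain ⟨S, hfin, hmem, hS⟩ := hsplit L hL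
  have hleft : {u | w ++ u ∈ L} = ⋃ p ∈ {p ∈ S | w ∈ p.1}, p.2 := by
    ext u
    simp [hS, and_assoc]
  have hright : {u | u ++ w ∈ L} = ⋃ p ∈ {p ∈ S | w ∈ p.2}, p.1 := by
    ext u
    simp [hS, and_assoc, and_comm]
  rw [hleft, hright]
  exact ⟨hsup.biSup_mem (hfin.sep _) hempty fun p hp => (hmem hp.1).2,
    hsup.biSup_mem (hfin.sep _) hempty fun p hp => (hmem hp.1).1⟩

lemma quotientClosed_polC (hempty : ∅ ∈ 𝒞) (hsplit : ∀ L ∈ 𝒞, FinitelySplits 𝒞 L) :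
    QuotientClosed (PolC 𝒞) :=
  quotientClosed_of_finitelySplits (subset_polC hempty) supClosed_polC
    fun _ => finitelySplits_polC hsplit

lemma inter_mcat_eq_biUnion {M : Lang A} {S : Set (Lang A × Lang A)}
    (hS : ∀ u v : List A, u ++ v ∈ M ↔ ∃ p ∈ S, u ∈ p.1 ∧ v ∈ p.2) (a : A) :
    M ∩ mcat K a L = ⋃ p ∈ S, mcat (p.1 ∩ K) a (leftQuotient [a] p.2 ∩ L) := by
  ext w
  simp only [mem_iUnion₂, exists_prop]
  constructor
  · rintro ⟨hw, k, hk, l, hl, rfl⟩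
    obtain ⟨p, hp, hkp, hlp⟩ := (hS _ _).1 hw
    exact ⟨p, hp, k, ⟨hkp, hk⟩, l, ⟨hlp, hl⟩, rfl⟩
  · rintro ⟨p, hp, k, ⟨hkp, hk⟩, l, ⟨hlp, hl⟩, rfl⟩
    exact ⟨(hS _ _).2 ⟨p, hp, hkp, hlp⟩, k, hk, l, hl, rfl⟩

lemma inter_mem_polC_of_finitelySplits (hempty : ∅ ∈ 𝒞) (hquot : QuotientClosed 𝒟)
    (hsplit : ∀ M ∈ 𝒟, FinitelySplits 𝒟 M) (hbase : ∀ M ∈ 𝒟, ∀ L ∈ 𝒞, M ∩ L ∈ PolC 𝒞)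
    {M : Lang A} (hM : M ∈ 𝒟) (hL : L ∈ PolC 𝒞) : M ∩ L ∈ PolC 𝒞 := by
  induction hL using polC_induction generalizing M with
  | base L hL => exact hbase M hM L hL
  | union K L _ _ hK hL =>
    rw [inter_union_distrib_left]
    exact supClosed_polC (hK hM) (hL hM)
  | mcat K L a _ _ hK hL =>
    obtain ⟨S, hfin, hmem, hS⟩ := hsplit M hM
    rw [inter_mcat_eq_biUnion hS]
    exact supClosed_polC.biSup_mem hfin (subset_polC hempty) fun p hp =>
      mcat_mem_polC (hK (hmem hp).1) a (hL (hquot _ (hmem hp).2 [a]).1)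

-- The induction runs twice: first against members of `𝒞`, which is the base case of the second.
lemma infClosed_polC (hempty : ∅ ∈ 𝒞) (hinf : InfClosed 𝒞) (hquot : QuotientClosed 𝒞)
    (hsplit : ∀ L ∈ 𝒞, FinitelySplits 𝒞 L) : InfClosed (PolC 𝒞) := by
  have inter_mem : ∀ L ∈ 𝒞, ∀ M ∈ PolC 𝒞, L ∩ M ∈ PolC 𝒞 := fun L hL M hM =>
    inter_mem_polC_of_finitelySplits hempty hquot hsplit
      (fun _ hK _ hL => subset_polC (hinf hK hL)) hL hM
  exact fun M hM L hL => inter_mem_polC_of_finitelySplits hempty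
    (quotientClosed_polC hempty hsplit) (fun _ => finitelySplits_polC hsplit)
    (fun M hM L hL => inter_comm L M ▸ inter_mem L hL M hM) hM hL

end Splitting

/-- For a quotient-closed lattice `𝒞` of regular languages,
`Pol 𝒞` is a quotient-closed lattice closed under concatenation and marked
concatenation. -/
theorem statement6 {A : Type} [Fintype A] (𝒞 : LClass A) (hlat : LangLattice 𝒞)
    (hqc : QuotientClosed 𝒞) (hreg : ∀ L ∈ 𝒞, RegularLang L) :
    LangLattice (PolC 𝒞) ∧ QuotientClosed (PolC 𝒞) ∧
      (∀ K L : Lang A, K ∈ PolC 𝒞 → L ∈ PolC 𝒞 → cat K L ∈ PolC 𝒞) ∧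
      (∀ (K L : Lang A) (a : A), K ∈ PolC 𝒞 → L ∈ PolC 𝒞 →
        mcat K a L ∈ PolC 𝒞) := by
  obtain ⟨hempty, huniv, -, hinter⟩ := hlat
  have hinf : InfClosed 𝒞 := fun K hK L hL => hinter K L hK hL
  have hsplit : ∀ L ∈ 𝒞, FinitelySplits 𝒞 L := fun L hL =>
    finitelySplits_of_finite_quotients huniv hinf hqc hL
      (hreg L hL).finite_range_leftQuotient (hreg L hL).finite_range_rightQuotient
  have hemptyPol : ∅ ∈ PolC 𝒞 := subset_polC hempty
  have hquotPol : QuotientClosed (PolC 𝒞) := quotientClosed_polC hempty hsplit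
  have hinfPol : InfClosed (PolC 𝒞) := infClosed_polC hempty hinf hqc hsplit
  exact ⟨⟨hemptyPol, subset_polC huniv, fun _ _ hK hL => supClosed_polC hK hL,
      fun _ _ hK hL => hinfPol hK hL⟩, hquotPol,
    fun _ _ hK hL => cat_mem_of_mcat_mem hemptyPol supClosed_polC hquotPol
      (fun _ hK a _ hL => mcat_mem_polC hK a hL) hK hL,
    fun _ _ a hK hL => mcat_mem_polC hK a hL⟩

end Paper
end

section
/- Let D be a lattice of languages over a finite alphabet A, let ρ : 2^{A*} → R be a rating map, and let L ⊆ A* be a language. Then there exists an optimal D-cover of L for ρ, i.e., a D-cover K of L such that I[ρ](K) ⊆ I[ρ](K') for every D-cover K' of L. -/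
open Set

namespace Paper

variable {A R M : Type}

/-!
The pairwise intersections of the members of two covers form a cover that refines both, and
refining a cover shrinks its imprint. The imprints of the `𝒟`-covers of `L` are therefore a
downward directed family of subsets of the finite set `R`, and such a family has a least element.
-/

open scoped SetFamily

section Imprint

variable [AddSemigroup R]

theorem rle_trans {r s t : R} (hrs : rle r s) (hst : rle s t) : rle r t :=
  calc
    r + t = r + (s + t) := by rw [hst]
    _ = t := by rw [← add_assoc, hrs, hst]

theorem imprint_subset_imprint {ρ : Lang A → R}
    (hρ : ∀ ⦃K K' : Lang A⦄, K ⊆ K' → rle (ρ K) (ρ K')) {Ks Ks' : LClass A}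
    (hrefines : IsCofinalFor Ks Ks') : imprint ρ Ks ⊆ imprint ρ Ks' := by
  rintro r ⟨K, hK, hr⟩
  obtain ⟨K', hK', hKK'⟩ := hrefines hK
  exact ⟨K', hK', rle_trans hr (hρ hKK')⟩

end Imprint

theorem IsRatingMap.rle_of_subset [AddCommMonoid R] {ρ : Lang A → R} (hρ : IsRatingMap ρ)
    ⦃K K' : Lang A⦄ (hKK' : K ⊆ K') : rle (ρ K) (ρ K') := by
  rw [rle, ← hρ.2, union_eq_self_of_subset_left hKK']

theorem infs_isCofinalFor_left {α : Type*} [SemilatticeInf α] (s t : Set α) :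
    IsCofinalFor (s ⊼ t) s :=
  forall_infs_iff.2 fun a ha _ _ => ⟨a, ha, inf_le_left⟩

theorem infs_isCofinalFor_right {α : Type*} [SemilatticeInf α] (s t : Set α) :
    IsCofinalFor (s ⊼ t) t :=
  forall_infs_iff.2 fun _ _ b hb => ⟨b, hb, inf_le_right⟩

section Cover

variable {𝒟 Ks Ks' : LClass A} {L : Lang A}

theorem IsCover.infs (hKs : IsCover Ks L) (hKs' : IsCover Ks' L) : IsCover (Ks ⊼ Ks') L := by
  refine ⟨hKs.1.image2 _ hKs'.1, fun w hw => ?_⟩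
  obtain ⟨K, hK, hwK⟩ := hKs.2 hw
  obtain ⟨K', hK', hwK'⟩ := hKs'.2 hw
  exact ⟨K ∩ K', inf_mem_infs hK hK', hwK, hwK'⟩

theorem IsCCover.infs (hinter : InfClosed 𝒟) (hKs : IsCCover 𝒟 Ks L)
    (hKs' : IsCCover 𝒟 Ks' L) : IsCCover 𝒟 (Ks ⊼ Ks') L :=
  ⟨hKs.1.infs hKs'.1, infs_subset_iff.2 fun _ hK _ hK' => hinter (hKs.2 hK) (hKs'.2 hK')⟩

theorem isCCover_singleton_univ (huniv : univ ∈ 𝒟) (L : Lang A) : IsCCover 𝒟 {univ} L :=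
  ⟨⟨finite_singleton univ, by simp⟩, singleton_subset_iff.2 huniv⟩

theorem directedOn_imprint_isCCover [AddSemigroup R] (hinter : InfClosed 𝒟) {ρ : Lang A → R}
    (hρ : ∀ ⦃K K' : Lang A⦄, K ⊆ K' → rle (ρ K) (ρ K')) (L : Lang A) :
    DirectedOn (fun I J => J ≤ I) (imprint ρ '' {Ks | IsCCover 𝒟 Ks L}) := by
  rintro _ ⟨Ks, hKs, rfl⟩ _ ⟨Ks', hKs', rfl⟩
  exact ⟨_, mem_image_of_mem _ (hKs.infs hinter hKs'),
    imprint_subset_imprint hρ (infs_isCofinalFor_left Ks Ks'),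
    imprint_subset_imprint hρ (infs_isCofinalFor_right Ks Ks')⟩

end Cover

theorem statement9_general {A R : Type} [AddSemigroup R] [Finite R] {𝒟 : LClass A}
    (huniv : univ ∈ 𝒟) (hinter : InfClosed 𝒟) {ρ : Lang A → R}
    (hρ : ∀ ⦃K K' : Lang A⦄, K ⊆ K' → rle (ρ K) (ρ K')) (L : Lang A) :
    ∃ Ks : LClass A, IsCCover 𝒟 Ks L ∧
      ∀ Ks' : LClass A, IsCCover 𝒟 Ks' L → imprint ρ Ks ⊆ imprint ρ Ks' := by
  have himprints_nonempty : (imprint ρ '' {Ks | IsCCover 𝒟 Ks L}).Nonempty :=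
    ⟨_, mem_image_of_mem _ (isCCover_singleton_univ huniv L)⟩
  obtain ⟨I, hI⟩ := (toFinite _).exists_minimal himprints_nonempty
  obtain ⟨⟨Ks, hKs, rfl⟩, hleast⟩ :=
    (directedOn_imprint_isCCover hinter hρ L).minimal_iff_isLeast.1 hI
  exact ⟨Ks, hKs, fun _ hKs' => hleast (mem_image_of_mem _ hKs')⟩

/-- For any lattice `𝒟`, rating map `ρ` and language `L`,
there exists an optimal `𝒟`-cover of `L` for `ρ`. -/
theorem statement9 {A R : Type} [Fintype A] [AddCommMonoid R] [Finite R]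
    (hidem : ∀ r : R, r + r = r)
    (𝒟 : LClass A) (hlat : LangLattice 𝒟)
    (ρ : Lang A → R) (hρ : IsRatingMap ρ) (L : Lang A) :
    ∃ Ks : LClass A, IsCCover 𝒟 Ks L ∧
      ∀ Ks' : LClass A, IsCCover 𝒟 Ks' L → imprint ρ Ks ⊆ imprint ρ Ks' := by
  obtain ⟨-, huniv, -, hinter⟩ := hlat
  exact statement9_general huniv (fun K hK K' hK' => hinter K K' hK hK') hρ.rle_of_subset L

end Paper
end

section
/- Let ρ : 2^{A*} → R be a rating map, D a lattice of languages, and H, L ⊆ A* two languages. Then I_D[H ∪ L, ρ] = I_D[H, ρ] ∪ I_D[L, ρ]. -/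
open Set

namespace Paper

variable {A R M : Type}

theorem IsCCover.anti {𝒞 Ks : LClass A} {H L : Lang A} (hHL : H ⊆ L) (hL : IsCCover 𝒞 Ks L) :
    IsCCover 𝒞 Ks H :=
  ⟨⟨hL.1.1, hHL.trans hL.1.2⟩, hL.2⟩

theorem IsCCover.union {𝒞 Ks Ks' : LClass A} {H L : Lang A}
    (hH : IsCCover 𝒞 Ks H) (hL : IsCCover 𝒞 Ks' L) : IsCCover 𝒞 (Ks ∪ Ks') (H ∪ L) := by
  refine ⟨⟨hH.1.1.union hL.1.1, ?_⟩, union_subset hH.2 hL.2⟩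
  rw [sUnion_union]
  exact union_subset_union hH.1.2 hL.1.2

section Imprint

variable [Add R]

theorem imprint_union (ρ : Lang A → R) (Ks Ks' : LClass A) :
    imprint ρ (Ks ∪ Ks') = imprint ρ Ks ∪ imprint ρ Ks' := by
  ext r
  simp only [imprint, mem_union, mem_ofPred_eq, or_and_right, exists_or]

theorem notMem_optImprint_iff {𝒟 : LClass A} {ρ : Lang A → R} {L : Lang A} {r : R} :
    r ∉ optImprint 𝒟 ρ L ↔ ∃ Ks, IsCCover 𝒟 Ks L ∧ r ∉ imprint ρ Ks := by
  simp only [optImprint, mem_ofPred_eq, not_forall, exists_prop]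

theorem optImprint_mono (𝒟 : LClass A) (ρ : Lang A → R) : Monotone (optImprint 𝒟 ρ) :=
  fun _ _ hHL _ hr Ks hKs => hr Ks (hKs.anti hHL)

theorem optImprint_union_subset (𝒟 : LClass A) (ρ : Lang A → R) (H L : Lang A) :
    optImprint 𝒟 ρ (H ∪ L) ⊆ optImprint 𝒟 ρ H ∪ optImprint 𝒟 ρ L := by
  intro r hr
  by_contra hnot
  obtain ⟨hrH, hrL⟩ := not_or.mp hnot
  obtain ⟨Ks, hKs, hrKs⟩ := notMem_optImprint_iff.mp hrH
  obtain ⟨Ks', hKs', hrKs'⟩ := notMem_optImprint_iff.mp hrL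
  have hmem : r ∈ imprint ρ Ks ∪ imprint ρ Ks' :=
    imprint_union ρ Ks Ks' ▸ hr _ (hKs.union hKs')
  exact hmem.elim hrKs hrKs'

theorem statement10_general (𝒟 : LClass A) (ρ : Lang A → R) (H L : Lang A) :
    optImprint 𝒟 ρ (H ∪ L) = optImprint 𝒟 ρ H ∪ optImprint 𝒟 ρ L :=
  (optImprint_union_subset 𝒟 ρ H L).antisymm ((optImprint_mono 𝒟 ρ).le_map_sup H L)

end Imprint

/-- Optimal imprints commute with union of languages. -/
theorem statement10 {A R : Type} [Fintype A] [AddCommMonoid R] [Finite R]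
    (hidem : ∀ r : R, r + r = r)
    (𝒟 : LClass A) (hlat : LangLattice 𝒟)
    (ρ : Lang A → R) (hρ : IsRatingMap ρ) (H L : Lang A) :
    optImprint 𝒟 ρ (H ∪ L) = optImprint 𝒟 ρ H ∪ optImprint 𝒟 ρ L :=
  statement10_general 𝒟 ρ H L

end Paper
end
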